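/- Let X₁ be the unique solution of −L X₁ = ω̄' satisfying ∫_𝕋 X₁(k)R(k)dk = 0 and ∫_𝕋 X₁²(k)R(k)dk < ∞. Then ∫_𝕋 ω̄'(k) X₁(k) dk = (1/2) 𝒟(X₁), and consequently, if ω' is not almost everywhere zero, the diffusion coefficient D = γ^{-1} ∫_𝕋 ω̄'(k) X₁(k) dk satisfies 0 < D < ∞. -/

import Mathlib

/-!
Write `μ` for Lebesgue measure on `𝕋`. Since `R(k) > 0` and the Bochner integral of a
non-integrable function is `0`, every section `R(k,·)` is integrable, so `X₁² R(·) ∈ L¹(μ)` says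
precisely that `X₁(k)² R(k,k')` is integrable on `𝕋²` (`integrable_sq_fst`). By symmetry of `R` and
`2|ab| ≤ a² + b²`, so are `X₁(k')² R(k,k')` and `X₁(k) X₁(k') R(k,k')`.

Multiplying `-L X₁ = ω̄'` by `X₁` gives `ω̄' X₁ = ∫ R(k,k') (X₁(k)² - X₁(k) X₁(k')) dk'`, which is
integrable by Fubini, and symmetrising in `(k,k')` turns its integral into `½ 𝒟(X₁)`.

If `𝒟(X₁) = 0`, then `R(k,k') (X₁(k) - X₁(k'))² = 0` a.e., hence the integrand of `L X₁(k)` vanishes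
for a.e. `k'`, for a.e. `k`; so `ω̄' = -L X₁ = 0` a.e. Thus `𝒟(X₁) > 0` unless `ω' = 0` a.e.
-/

open MeasureTheory Set Real

noncomputable section

/-- The one-dimensional torus `𝕋`, identified with the interval `(-1/2, 1/2]`. -/
def Tor : Set ℝ := Set.Ioc (-(1/2) : ℝ) (1/2)

/-- `ω̄'(k) = ω'(k)/(2π)`. -/
def obar (ω : ℝ → ℝ) (k : ℝ) : ℝ := deriv ω k / (2 * π)

/-- Total scattering kernel `R(k) = ∫_𝕋 R(k,k')dk'`. -/
def Rtot (R : ℝ → ℝ → ℝ) (k : ℝ) : ℝ := ∫ k' in Tor, R k k'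

/-- Scattering operator `L F(k) = ∫_𝕋 R(k,k')[F(k') − F(k)]dk'`. -/
def scatL (R : ℝ → ℝ → ℝ) (F : ℝ → ℝ) (k : ℝ) : ℝ :=
  ∫ k' in Tor, R k k' * (F k' - F k)

/-- Dirichlet form `𝒟(f) = ∫_{𝕋²} R(k,k')[f(k) − f(k')]² dk dk'`. -/
def Dform (R : ℝ → ℝ → ℝ) (f : ℝ → ℝ) : ℝ :=
  ∫ k in Tor, ∫ k' in Tor, R k k' * (f k - f k') ^ 2

lemma integrable_sq_fst {R : ℝ → ℝ → ℝ}
    (hRmeas : Measurable (fun p : ℝ × ℝ => R p.1 p.2))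
    (hRnn : ∀ k k', 0 ≤ R k k')
    (hRtotpos : ∀ k ∈ Tor, 0 < Rtot R k)
    {X : ℝ → ℝ} (hX : Measurable X)
    (hL2 : IntegrableOn (fun k => X k ^ 2 * Rtot R k) Tor) :
    Integrable (fun p : ℝ × ℝ => R p.1 p.2 * X p.1 ^ 2)
      ((volume.restrict Tor).prod (volume.restrict Tor)) := by
  have hm : Measurable (fun p : ℝ × ℝ => R p.1 p.2 * X p.1 ^ 2) :=
    hRmeas.mul ((hX.comp measurable_fst).pow_const 2)
  rw [integrable_prod_iff hm.aestronglyMeasurable]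
  constructor
  · have hT : MeasurableSet Tor := measurableSet_Ioc
    filter_upwards [ae_restrict_mem hT] with k hk
    have hRk : Integrable (fun k' => R k k') (volume.restrict Tor) := by
      -- a non-integrable section would have integral `0`
      by_contra h
      exact (hRtotpos k hk).ne' (integral_undef h)
    exact hRk.mul_const _
  · refine hL2.congr (Filter.Eventually.of_forall fun k => ?_)
    have h : ∀ k', ‖R k k' * X k ^ 2‖ = R k k' * X k ^ 2 := fun k' =>
      Real.norm_of_nonneg (mul_nonneg (hRnn _ _) (sq_nonneg _))
    simp only [h, integral_mul_const, Rtot]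
    ring

/-- For the solution `X₁` of `−LX₁ = ω̄'` with `∫X₁Rdk = 0` and `∫X₁²Rdk < ∞`, one has
`∫_𝕋 ω̄' X₁ dk = ½𝒟(X₁)`; consequently if `ω'` is not a.e. zero, the diffusion
coefficient `D = γ⁻¹∫_𝕋 ω̄' X₁ dk` satisfies `0 < D < ∞` (in particular `ω̄' X₁` is
integrable, so `D` is a finite real number). -/
theorem stmt8 (ω : ℝ → ℝ) (R : ℝ → ℝ → ℝ) (γ : ℝ) (hγ : 0 < γ)
    (hωeven : ∀ k, ω (-k) = ω k) (hωnn : ∀ k, 0 ≤ ω k)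
    (hωsmooth : ContDiffOn ℝ (⊤ : ℕ∞) ω (Tor \ {0}))
    (hωuni : ∀ k ∈ Set.Ioo (-(1/2) : ℝ) (1/2), 0 ≤ k * deriv ω k)
    (hRmeas : Measurable (fun p : ℝ × ℝ => R p.1 p.2))
    (hRsymm : ∀ k k', R k k' = R k' k)
    (hRnn : ∀ k k', 0 ≤ R k k')
    (hRpos : ∀ k ∈ Tor, ∀ k' ∈ Tor, k ≠ 0 → k' ≠ 0 → 0 < R k k')
    (hRtotpos : ∀ k ∈ Tor, 0 < Rtot R k)
    (hstoch : ContDiffOn ℝ (⊤ : ℕ∞) (fun p : ℝ × ℝ => R p.1 p.2 / Rtot R p.1) (Tor ×ˢ Tor))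
    (hfin : IntegrableOn (fun k => (deriv ω k) ^ 2 / Rtot R k) Tor)
    (X1 : ℝ → ℝ) (hX1meas : Measurable X1)
    (hX1eq : ∀ᵐ k ∂(volume.restrict Tor), -scatL R X1 k = obar ω k)
    (hX1mean : (∫ k in Tor, X1 k * Rtot R k) = 0)
    (hX1L2 : IntegrableOn (fun k => X1 k ^ 2 * Rtot R k) Tor) :
    (∫ k in Tor, obar ω k * X1 k) = (1 / 2) * Dform R X1 ∧
    IntegrableOn (fun k => obar ω k * X1 k) Tor ∧
    (¬ (∀ᵐ k ∂(volume.restrict Tor), deriv ω k = 0) →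
      0 < (1 / γ) * ∫ k in Tor, obar ω k * X1 k) := by
  set μ : Measure ℝ := volume.restrict Tor with hμ
  have h1 : Integrable (fun p : ℝ × ℝ => R p.1 p.2 * X1 p.1 ^ 2) (μ.prod μ) :=
    integrable_sq_fst hRmeas hRnn hRtotpos hX1meas hX1L2
  have h2 : Integrable (fun p : ℝ × ℝ => R p.1 p.2 * X1 p.2 ^ 2) (μ.prod μ) := by
    refine h1.swap.congr (Filter.Eventually.of_forall fun p => ?_)
    simp only [Function.comp, Prod.fst_swap, Prod.snd_swap, hRsymm p.2 p.1]
  have h3 : Integrable (fun p : ℝ × ℝ => R p.1 p.2 * (X1 p.1 * X1 p.2)) (μ.prod μ) := by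
    refine (h1.add h2).mono' ?_ (Filter.Eventually.of_forall fun p => ?_)
    · exact (hRmeas.mul ((hX1meas.comp measurable_fst).mul
        (hX1meas.comp measurable_snd))).aestronglyMeasurable
    · simp only [Pi.add_apply, norm_mul, Real.norm_eq_abs, abs_of_nonneg (hRnn p.1 p.2)]
      rw [← mul_add]
      refine mul_le_mul_of_nonneg_left ?_ (hRnn _ _)
      rw [← sq_abs (X1 p.1), ← sq_abs (X1 p.2)]
      nlinarith [sq_nonneg (|X1 p.1| - |X1 p.2|), sq_nonneg (|X1 p.1|), sq_nonneg (|X1 p.2|)]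
  have hG : Integrable (fun p : ℝ × ℝ => R p.1 p.2 * X1 p.1 ^ 2
      - R p.1 p.2 * (X1 p.1 * X1 p.2)) (μ.prod μ) := h1.sub h3
  have hD : Integrable (fun p : ℝ × ℝ => R p.1 p.2 * (X1 p.1 - X1 p.2) ^ 2) (μ.prod μ) := by
    refine ((h1.add h2).sub (h3.const_mul 2)).congr (Filter.Eventually.of_forall fun p => ?_)
    simp only [Pi.add_apply, Pi.sub_apply]
    ring
  have hae : (fun k => ∫ k', (R k k' * X1 k ^ 2 - R k k' * (X1 k * X1 k')) ∂μ)
      =ᵐ[μ] fun k => obar ω k * X1 k := by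
    filter_upwards [hX1eq] with k hk
    rw [← hk, scatL, neg_mul, ← integral_mul_const, ← integral_neg]
    refine integral_congr_ae (Filter.Eventually.of_forall fun k' => ?_)
    simp only
    ring
  have hint : Integrable (fun k => obar ω k * X1 k) μ := hG.integral_prod_left.congr hae
  have hDf : Dform R X1 = ∫ p, R p.1 p.2 * (X1 p.1 - X1 p.2) ^ 2 ∂(μ.prod μ) :=
    (integral_prod _ hD).symm
  have h12 : ∫ p : ℝ × ℝ, R p.1 p.2 * X1 p.2 ^ 2 ∂(μ.prod μ)
      = ∫ p : ℝ × ℝ, R p.1 p.2 * X1 p.1 ^ 2 ∂(μ.prod μ) := by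
    rw [← integral_prod_swap]
    refine integral_congr_ae (Filter.Eventually.of_forall fun p => ?_)
    simp only [Prod.fst_swap, Prod.snd_swap, hRsymm p.2 p.1]
  have hEq : (∫ k, obar ω k * X1 k ∂μ) = (1 / 2) * Dform R X1 := by
    have e1 : (∫ k, obar ω k * X1 k ∂μ) = ∫ p : ℝ × ℝ, (R p.1 p.2 * X1 p.1 ^ 2
        - R p.1 p.2 * (X1 p.1 * X1 p.2)) ∂(μ.prod μ) := by
      rw [integral_prod _ hG]
      exact (integral_congr_ae hae).symm
    have e2 : Dform R X1 = ∫ p : ℝ × ℝ, ((R p.1 p.2 * X1 p.1 ^ 2 + R p.1 p.2 * X1 p.2 ^ 2)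
        - 2 * (R p.1 p.2 * (X1 p.1 * X1 p.2))) ∂(μ.prod μ) := by
      rw [hDf]
      refine integral_congr_ae (Filter.Eventually.of_forall fun p => ?_)
      simp only
      ring
    have hadd : Integrable (fun p : ℝ × ℝ => R p.1 p.2 * X1 p.1 ^ 2 + R p.1 p.2 * X1 p.2 ^ 2)
        (μ.prod μ) := h1.add h2
    rw [e1, e2, integral_sub h1 h3, integral_sub hadd (h3.const_mul 2),
      integral_add h1 h2, integral_const_mul, h12]
    ring
  refine ⟨hEq, hint, fun hne => ?_⟩
  rw [hEq]
  have hnn : ∀ p : ℝ × ℝ, 0 ≤ R p.1 p.2 * (X1 p.1 - X1 p.2) ^ 2 := fun p =>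
    mul_nonneg (hRnn _ _) (sq_nonneg _)
  have hD0 : 0 ≤ Dform R X1 := hDf ▸ integral_nonneg hnn
  have hDne : Dform R X1 ≠ 0 := by
    intro h0
    apply hne
    rw [hDf, integral_eq_zero_iff_of_nonneg hnn hD] at h0
    filter_upwards [Measure.ae_ae_of_ae_prod h0, hX1eq] with k hk hk2
    have hL : scatL R X1 k = 0 := by
      refine integral_eq_zero_of_ae ?_
      filter_upwards [hk] with k' hk'
      rcases mul_eq_zero.mp hk' with h | h
      · simp only [Pi.zero_apply]
        rw [show R k k' = 0 from h, zero_mul]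
      · have h' : X1 k - X1 k' = 0 := pow_eq_zero_iff (two_ne_zero) |>.mp h
        simp only [Pi.zero_apply]
        rw [show X1 k' - X1 k = 0 by linarith, mul_zero]
    rw [hL, neg_zero, obar] at hk2
    have hpi : (2 * π) ≠ 0 := by positivity
    exact (div_eq_zero_iff.mp hk2.symm).resolve_right hpi
  have : 0 < Dform R X1 := lt_of_le_of_ne hD0 hDne.symm
  positivity
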